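/- arXiv:2410.20209 — 2 statements merged into one kernel-verified Lean document; each statement's English description precedes it below -/
import Mathlib

section
/- Let d ≥ 3 and ℓ ≥ 1 be integers. For all x ∈ [−1,1], the d-dimensional Legendre polynomials satisfy P_{2ℓ}(x) − P_{2ℓ+2}(x) ≤ ((4ℓ + d)/(d − 1)) · (1 − x²). -/
/-!
Write `z = x + i s √(1 - x²)`. Since `1 - z² = (1 - x²)(1 - s²) - 2 i s √(1 - x²) z`, the
difference `Re zⁿ - Re zⁿ⁺²` is `(1 - x²)(1 - s²) Re zⁿ` plus a multiple of `s Im zⁿ⁺¹`. Integrating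
the latter by parts against `(1 - s²) ^ ((d - 4) / 2)` raises the exponent of the weight by one,
that is, the dimension by two, and gives the exact identity
`P_n^(d) - P_(n+2)^(d) = (2n + d) / (d - 1) * (1 - x²) * P_n^(d+2)`.
The bound follows because `|z| ≤ 1` and because `ω_(d-3) / ω_(d-2)` is the inverse of the total
mass of the weight, so that `|P_n^(d+2)| ≤ 1`.
-/

open MeasureTheory

/-- The constant ω_p = 2π^((p+1)/2) / Γ((p+1)/2). -/
noncomputable def omegaConst (p : ℝ) : ℝ :=
  2 * Real.pi ^ ((p + 1) / 2) / Real.Gamma ((p + 1) / 2)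

/-- The d-dimensional Legendre polynomial of order n, normalized so that P_n(1) = 1,
given by the integral representation
P_n(x) = (ω_{d−3}/ω_{d−2}) ∫_{−1}^{1} Re((x + i s √(1−x²))^n) (1−s²)^((d−4)/2) ds. -/
noncomputable def legendreP (d : ℕ) (n : ℕ) (x : ℝ) : ℝ :=
  (omegaConst ((d : ℝ) - 3) / omegaConst ((d : ℝ) - 2)) *
    ∫ s in (-1 : ℝ)..1,
      (((x : ℂ) + Complex.I * (s : ℂ) * (Real.sqrt (1 - x ^ 2) : ℂ)) ^ n).re *
        (1 - s ^ 2) ^ (((d : ℝ) - 4) / 2)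

/-- The eigenvalue λ_k = k(k + d − 2) of the (minus) spherical Laplacian on S^{d−1}. -/
noncomputable def lambdaEig (d k : ℕ) : ℝ := (k : ℝ) * ((k : ℝ) + (d : ℝ) - 2)

/-- The point `x + i s √(1 - x²)` whose powers are averaged in Laplace's integral representation
of the Legendre polynomials. -/
noncomputable def laplaceKernel (x s : ℝ) : ℂ :=
  x + Complex.I * s * √(1 - x ^ 2)

/-- Laplace's integral with weight `(1 - s²) ^ r`, for a real exponent `r`. At `r = (d - 4) / 2`
it is the unnormalized Legendre polynomial of dimension `d`. -/
noncomputable def laplaceIntegral (r : ℝ) (n : ℕ) (x : ℝ) : ℝ :=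
  ∫ s in (-1 : ℝ)..1, (laplaceKernel x s ^ n).re * (1 - s ^ 2) ^ r

section BetaIntegral

variable {a b : ℝ}

lemma ofReal_rpow_mul_one_sub_rpow {t : ℝ} (ht : t ∈ Set.uIcc (0 : ℝ) 1) :
    ((t ^ (a - 1) * (1 - t) ^ (b - 1) : ℝ) : ℂ) =
      (t : ℂ) ^ ((a : ℂ) - 1) * (1 - (t : ℂ)) ^ ((b : ℂ) - 1) := by
  rw [Set.uIcc_of_le zero_le_one] at ht
  simp [Complex.ofReal_cpow ht.1, Complex.ofReal_cpow (sub_nonneg.2 ht.2)]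

lemma integral_rpow_mul_one_sub_rpow (ha : 0 < a) (hb : 0 < b) :
    ∫ t in (0 : ℝ)..1, t ^ (a - 1) * (1 - t) ^ (b - 1) = ProbabilityTheory.beta a b := by
  rw [ProbabilityTheory.beta_eq_betaIntegralReal a b ha hb, Complex.betaIntegral,
    ← intervalIntegral.integral_congr fun t ht ↦ ofReal_rpow_mul_one_sub_rpow ht,
    intervalIntegral.integral_ofReal, Complex.ofReal_re]

end BetaIntegral

lemma one_sub_sq_nonneg {s : ℝ} (hs : s ∈ Set.Icc (-1 : ℝ) 1) : 0 ≤ 1 - s ^ 2 := by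
  nlinarith [hs.1, hs.2]

section Weight

variable {r : ℝ}

lemma one_sub_sq_rpow_comp_two_mul_sub_one {t : ℝ} (ht : t ∈ Set.uIcc (0 : ℝ) 1) :
    (1 - (2 * t - 1) ^ 2) ^ r = 4 ^ r * (t ^ r * (1 - t) ^ r) := by
  rw [Set.uIcc_of_le zero_le_one] at ht
  have ht' : 0 ≤ 1 - t := sub_nonneg.2 ht.2
  rw [← Real.mul_rpow ht.1 ht', ← Real.mul_rpow zero_le_four (mul_nonneg ht.1 ht')]
  ring_nf

lemma integral_one_sub_sq_rpow (hr : -1 < r) :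
    ∫ s in (-1 : ℝ)..1, (1 - s ^ 2) ^ r =
      √Real.pi * Real.Gamma (r + 1) / Real.Gamma (r + 3 / 2) := by
  have hr1 : 0 < r + 1 := by linarith
  have hsubst : ∫ s in (-1 : ℝ)..1, (1 - s ^ 2) ^ r =
      2 * (4 ^ r * ProbabilityTheory.beta (r + 1) (r + 1)) := by
    have h := intervalIntegral.mul_integral_comp_mul_sub (a := 0) (b := 1)
      (f := fun s : ℝ ↦ (1 - s ^ 2) ^ r) 2 1
    rw [intervalIntegral.integral_congr fun t ht ↦ one_sub_sq_rpow_comp_two_mul_sub_one ht,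
      intervalIntegral.integral_const_mul] at h
    rw [← integral_rpow_mul_one_sub_rpow hr1 hr1, add_sub_cancel_right, h]
    norm_num
  have hdup : Real.Gamma (r + 1) * Real.Gamma (r + 3 / 2) =
      Real.Gamma (2 * (r + 1)) * 2 ^ (1 - 2 * (r + 1)) * √Real.pi := by
    rw [← Real.Gamma_mul_Gamma_add_half, show r + 1 + 1 / 2 = r + 3 / 2 by ring]
  have hpow : (2 : ℝ) * 4 ^ r * 2 ^ (1 - 2 * (r + 1)) = 1 := by
    rw [show 1 - 2 * (r + 1) = -(1 + 2 * r) by ring, Real.rpow_neg zero_le_two,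
      Real.rpow_add zero_lt_two, Real.rpow_one, Real.rpow_mul zero_le_two,
      show (2 : ℝ) ^ (2 : ℝ) = 4 by norm_num]
    exact mul_inv_cancel₀ (by positivity)
  have hΓ : Real.Gamma (2 * (r + 1)) ≠ 0 := (Real.Gamma_pos_of_pos (by linarith)).ne'
  have hΓ' : Real.Gamma (r + 3 / 2) ≠ 0 := (Real.Gamma_pos_of_pos (by linarith)).ne'
  rw [hsubst, ProbabilityTheory.beta, ← two_mul, eq_div_iff hΓ']
  calc 2 * (4 ^ r * (Real.Gamma (r + 1) * Real.Gamma (r + 1) / Real.Gamma (2 * (r + 1)))) *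
        Real.Gamma (r + 3 / 2)
      = 2 * 4 ^ r * Real.Gamma (r + 1) * (Real.Gamma (r + 1) * Real.Gamma (r + 3 / 2)) /
          Real.Gamma (2 * (r + 1)) := by ring
    _ = 2 * 4 ^ r * 2 ^ (1 - 2 * (r + 1)) * (√Real.pi * Real.Gamma (r + 1)) := by
        rw [hdup, div_eq_iff hΓ]
        ring
    _ = √Real.pi * Real.Gamma (r + 1) := by rw [hpow, one_mul]

lemma intervalIntegrable_one_sub_sq_rpow (hr : -1 < r) :
    IntervalIntegrable (fun s : ℝ ↦ (1 - s ^ 2) ^ r) volume (-1) 1 := by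
  refine intervalIntegral.intervalIntegrable_of_integral_ne_zero ?_
  have hΓ : 0 < Real.Gamma (r + 1) := Real.Gamma_pos_of_pos (by linarith)
  have hΓ' : 0 < Real.Gamma (r + 3 / 2) := Real.Gamma_pos_of_pos (by linarith)
  rw [integral_one_sub_sq_rpow hr]
  positivity

lemma hasDerivAt_one_sub_sq_rpow {a s : ℝ} (hs : 1 - s ^ 2 ≠ 0) :
    HasDerivAt (fun s : ℝ ↦ (1 - s ^ 2) ^ a) (-(2 * a * (s * (1 - s ^ 2) ^ (a - 1)))) s := by
  have h := (((hasDerivAt_id' s).pow 2).const_sub 1).rpow_const (p := a) (Or.inl hs)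
  refine h.congr_deriv ?_
  simp only [Nat.cast_ofNat, Nat.add_one_sub_one, pow_one, mul_one, Pi.pow_apply]
  ring

lemma integral_deriv_mul_one_sub_sq_rpow {a : ℝ} (ha : 0 < a) {g g' : ℝ → ℝ}
    (hg : ContinuousOn g (Set.uIcc (-1) 1)) (hgg' : ∀ s ∈ Set.Ioo (-1 : ℝ) 1, HasDerivAt g (g' s) s)
    (hg' : IntervalIntegrable g' volume (-1) 1) :
    ∫ s in (-1 : ℝ)..1, g' s * (1 - s ^ 2) ^ a =
      2 * a * ∫ s in (-1 : ℝ)..1, g s * (s * (1 - s ^ 2) ^ (a - 1)) := by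
  have hcont : Continuous fun s : ℝ ↦ (1 - s ^ 2) ^ a :=
    Continuous.rpow_const (by fun_prop) fun _ ↦ Or.inr ha.le
  have hne : ∀ s ∈ Set.Ioo (min (-1 : ℝ) 1) (max (-1) 1), 1 - s ^ 2 ≠ 0 := fun s hs ↦ by
    norm_num at hs
    nlinarith [hs.1, hs.2]
  have hint :
      IntervalIntegrable (fun s : ℝ ↦ -(2 * a * (s * (1 - s ^ 2) ^ (a - 1)))) volume (-1) 1 :=
    (((intervalIntegrable_one_sub_sq_rpow (by linarith)).continuousOn_mul
      continuousOn_id).const_mul _).neg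
  have hparts := intervalIntegral.integral_mul_deriv_eq_deriv_mul_of_hasDerivAt hg
    hcont.continuousOn (by simpa using hgg') (fun s hs ↦ hasDerivAt_one_sub_sq_rpow (hne s hs))
    hg' hint
  simp only [mul_neg, intervalIntegral.integral_neg, mul_left_comm _ (2 * a),
    intervalIntegral.integral_const_mul] at hparts
  simpa [Real.zero_rpow ha.ne'] using hparts.symm

end Weight

section OmegaConst

variable {p : ℝ}

lemma omegaConst_pos (hp : -1 < p) : 0 < omegaConst p := by
  have hΓ : 0 < Real.Gamma ((p + 1) / 2) := Real.Gamma_pos_of_pos (by linarith)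
  unfold omegaConst
  positivity

lemma omegaConst_add_two (hp : -1 < p) :
    omegaConst (p + 2) = 2 * Real.pi / (p + 1) * omegaConst p := by
  have hq : 0 < (p + 1) / 2 := by linarith
  unfold omegaConst
  rw [show (p + 2 + 1) / 2 = (p + 1) / 2 + 1 by ring, Real.Gamma_add_one hq.ne',
    Real.rpow_add_one Real.pi_ne_zero]
  field_simp

lemma integral_one_sub_sq_rpow_eq_omegaConst_div (hp : -1 < p) :
    ∫ s in (-1 : ℝ)..1, (1 - s ^ 2) ^ ((p - 1) / 2) = omegaConst (p + 1) / omegaConst p := by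
  have hΓ : Real.Gamma ((p + 1) / 2) ≠ 0 := (Real.Gamma_pos_of_pos (by linarith)).ne'
  rw [integral_one_sub_sq_rpow (by linarith), omegaConst, omegaConst,
    show (p - 1) / 2 + 1 = (p + 1) / 2 by ring,
    show (p - 1) / 2 + 3 / 2 = (p + 1) / 2 + 1 / 2 by ring,
    show (p + 1 + 1) / 2 = (p + 1) / 2 + 1 / 2 by ring, Real.rpow_add Real.pi_pos,
    ← Real.sqrt_eq_rpow]
  field_simp

end OmegaConst

section LaplaceKernel

variable {x s : ℝ}

lemma sq_sqrt_one_sub_sq (hx : x ∈ Set.Icc (-1 : ℝ) 1) : √(1 - x ^ 2) ^ 2 = 1 - x ^ 2 :=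
  Real.sq_sqrt (one_sub_sq_nonneg hx)

@[fun_prop]
lemma continuous_laplaceKernel : Continuous (laplaceKernel x) := by
  unfold laplaceKernel
  fun_prop

lemma hasDerivAt_laplaceKernel :
    HasDerivAt (laplaceKernel x) (Complex.I * √(1 - x ^ 2)) s := by
  have h := (((hasDerivAt_id s).ofReal_comp.const_mul Complex.I).mul_const
    (√(1 - x ^ 2) : ℂ)).const_add (x : ℂ)
  simpa only [Complex.ofReal_one, mul_one] using! h

lemma hasDerivAt_im_laplaceKernel_pow_succ (n : ℕ) :
    HasDerivAt (fun s ↦ (laplaceKernel x s ^ (n + 1)).im)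
      ((n + 1) * √(1 - x ^ 2) * (laplaceKernel x s ^ n).re) s := by
  have h := Complex.imCLM.hasFDerivAt.comp_hasDerivAt s
    ((hasDerivAt_laplaceKernel (x := x) (s := s)).pow (n + 1))
  refine h.congr_deriv ?_
  have hmul : ((n + 1 : ℕ) : ℂ) * laplaceKernel x s ^ n * (Complex.I * √(1 - x ^ 2)) =
      ((n + 1) * √(1 - x ^ 2) : ℝ) * (Complex.I * laplaceKernel x s ^ n) := by
    push_cast
    ring
  rw [Nat.add_sub_cancel, hmul, Complex.imCLM_apply, Complex.im_ofReal_mul, Complex.I_mul_im]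

lemma norm_laplaceKernel_le_one (hx : x ∈ Set.Icc (-1 : ℝ) 1) (hs : s ∈ Set.Icc (-1 : ℝ) 1) :
    ‖laplaceKernel x s‖ ≤ 1 := by
  have hw := sq_sqrt_one_sub_sq hx
  rw [← sq_le_one_iff₀ (norm_nonneg _), Complex.sq_norm, Complex.normSq_apply]
  simp only [laplaceKernel, Complex.add_re, Complex.add_im, Complex.mul_re, Complex.mul_im,
    Complex.I_re, Complex.I_im, Complex.ofReal_re, Complex.ofReal_im]
  nlinarith [mul_nonneg (sq_nonneg √(1 - x ^ 2)) (one_sub_sq_nonneg hs)]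

lemma one_sub_laplaceKernel_sq (hx : x ∈ Set.Icc (-1 : ℝ) 1) :
    1 - laplaceKernel x s ^ 2 =
      ((1 - x ^ 2) * (1 - s ^ 2) : ℝ) -
        (2 * (s * √(1 - x ^ 2)) : ℝ) * (Complex.I * laplaceKernel x s) := by
  have hw : ((√(1 - x ^ 2) : ℝ) : ℂ) ^ 2 = 1 - x ^ 2 := mod_cast sq_sqrt_one_sub_sq hx
  unfold laplaceKernel
  push_cast
  linear_combination (s ^ 2 * (√(1 - x ^ 2) : ℂ) ^ 2) * Complex.I_sq - s ^ 2 * hw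

lemma re_laplaceKernel_pow_sub_pow_add_two (hx : x ∈ Set.Icc (-1 : ℝ) 1) (n : ℕ) :
    (laplaceKernel x s ^ n).re - (laplaceKernel x s ^ (n + 2)).re =
      (1 - x ^ 2) * (1 - s ^ 2) * (laplaceKernel x s ^ n).re +
        2 * √(1 - x ^ 2) * (s * (laplaceKernel x s ^ (n + 1)).im) := by
  have h : laplaceKernel x s ^ n - laplaceKernel x s ^ (n + 2) =
      ((1 - x ^ 2) * (1 - s ^ 2) : ℝ) * laplaceKernel x s ^ n -
        (2 * (s * √(1 - x ^ 2)) : ℝ) * (Complex.I * laplaceKernel x s ^ (n + 1)) := by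
    linear_combination laplaceKernel x s ^ n * one_sub_laplaceKernel_sq (s := s) hx
  have hre := congrArg Complex.re h
  simp only [Complex.sub_re, Complex.re_ofReal_mul, Complex.I_mul_re] at hre
  linarith

end LaplaceKernel

section LaplaceIntegral

variable {r x : ℝ}

lemma intervalIntegrable_re_laplaceKernel_pow_mul (hr : -1 < r) (n : ℕ) :
    IntervalIntegrable (fun s ↦ (laplaceKernel x s ^ n).re * (1 - s ^ 2) ^ r) volume (-1) 1 :=
  (intervalIntegrable_one_sub_sq_rpow hr).continuousOn_mul
    (Complex.continuous_re.comp (by fun_prop)).continuousOn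

lemma abs_laplaceIntegral_le (hr : -1 < r) (n : ℕ) (hx : x ∈ Set.Icc (-1 : ℝ) 1) :
    |laplaceIntegral r n x| ≤ ∫ s in (-1 : ℝ)..1, (1 - s ^ 2) ^ r := by
  rw [← Real.norm_eq_abs]
  refine intervalIntegral.norm_integral_le_of_norm_le (by norm_num) (ae_of_all _ fun s hs ↦ ?_)
    (intervalIntegrable_one_sub_sq_rpow hr)
  have hs' : s ∈ Set.Icc (-1 : ℝ) 1 := Set.Ioc_subset_Icc_self hs
  have hweight : 0 ≤ (1 - s ^ 2) ^ r := Real.rpow_nonneg (one_sub_sq_nonneg hs') r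
  have hpow : ‖laplaceKernel x s ^ n‖ ≤ 1 := by
    rw [norm_pow]
    exact pow_le_one₀ (norm_nonneg _) (norm_laplaceKernel_le_one hx hs')
  rw [norm_mul, Real.norm_of_nonneg hweight]
  exact mul_le_of_le_one_left hweight ((Complex.abs_re_le_norm _).trans hpow)

lemma integral_im_laplaceKernel_pow_succ (hr : -1 < r) (n : ℕ) :
    2 * (r + 1) * ∫ s in (-1 : ℝ)..1, (laplaceKernel x s ^ (n + 1)).im * (s * (1 - s ^ 2) ^ r) =
      (n + 1) * √(1 - x ^ 2) * laplaceIntegral (r + 1) n x := by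
  have hre : Continuous fun s ↦ (laplaceKernel x s ^ n).re :=
    Complex.continuous_re.comp (by fun_prop)
  have him : Continuous fun s ↦ (laplaceKernel x s ^ (n + 1)).im :=
    Complex.continuous_im.comp (by fun_prop)
  have hparts := integral_deriv_mul_one_sub_sq_rpow (by linarith : 0 < r + 1) him.continuousOn
    (fun s _ ↦ hasDerivAt_im_laplaceKernel_pow_succ n)
    ((hre.const_mul _).intervalIntegrable (-1) 1)
  simp only [add_sub_cancel_right] at hparts
  rw [← hparts, laplaceIntegral, ← intervalIntegral.integral_const_mul]
  simp only [mul_assoc]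

lemma laplaceIntegral_sub_add_two (hr : -1 < r) (n : ℕ) (hx : x ∈ Set.Icc (-1 : ℝ) 1) :
    laplaceIntegral r n x - laplaceIntegral r (n + 2) x =
      (r + n + 2) / (r + 1) * (1 - x ^ 2) * laplaceIntegral (r + 1) n x := by
  have hr1 : r + 1 ≠ 0 := by linarith
  have him : IntervalIntegrable
      (fun s ↦ (laplaceKernel x s ^ (n + 1)).im * (s * (1 - s ^ 2) ^ r)) volume (-1) 1 :=
    ((intervalIntegrable_one_sub_sq_rpow hr).continuousOn_mul continuousOn_id).continuousOn_mul
      (Complex.continuous_im.comp (by fun_prop)).continuousOn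
  have hsplit : laplaceIntegral r n x - laplaceIntegral r (n + 2) x =
      (1 - x ^ 2) * laplaceIntegral (r + 1) n x + 2 * √(1 - x ^ 2) *
        ∫ s in (-1 : ℝ)..1, (laplaceKernel x s ^ (n + 1)).im * (s * (1 - s ^ 2) ^ r) := by
    simp only [laplaceIntegral]
    rw [← intervalIntegral.integral_const_mul, ← intervalIntegral.integral_const_mul,
      ← intervalIntegral.integral_sub (intervalIntegrable_re_laplaceKernel_pow_mul hr n)
        (intervalIntegrable_re_laplaceKernel_pow_mul hr (n + 2)),
      ← intervalIntegral.integral_add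
        ((intervalIntegrable_re_laplaceKernel_pow_mul (by linarith) n).const_mul _)
        (him.const_mul _)]
    refine intervalIntegral.integral_congr fun s hs ↦ ?_
    rw [Set.uIcc_of_le (by norm_num)] at hs
    have hweight : (1 - s ^ 2) ^ (r + 1) = (1 - s ^ 2) ^ r * (1 - s ^ 2) :=
      Real.rpow_add_one' (one_sub_sq_nonneg hs) hr1
    simp only [hweight, ← sub_mul, re_laplaceKernel_pow_sub_pow_add_two hx]
    ring
  rw [hsplit, div_mul_eq_mul_div, div_mul_eq_mul_div, eq_div_iff hr1]
  linear_combination √(1 - x ^ 2) * integral_im_laplaceKernel_pow_succ (x := x) hr n +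
    (n + 1) * laplaceIntegral (r + 1) n x * sq_sqrt_one_sub_sq hx

end LaplaceIntegral

section LegendreP

variable {d : ℕ} {x : ℝ}

lemma legendreP_eq (n : ℕ) :
    legendreP d n x =
      omegaConst (d - 3) / omegaConst (d - 2) * laplaceIntegral ((d - 4) / 2) n x :=
  rfl

lemma abs_legendreP_le_one (hd : 3 ≤ d) (n : ℕ) (hx : x ∈ Set.Icc (-1 : ℝ) 1) :
    |legendreP d n x| ≤ 1 := by
  have hd' : (3 : ℝ) ≤ d := mod_cast hd
  have hω : 0 < omegaConst (d - 3) := omegaConst_pos (by linarith)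
  have hω' : 0 < omegaConst (d - 2) := omegaConst_pos (by linarith)
  have hmass : ∫ s in (-1 : ℝ)..1, (1 - s ^ 2) ^ (((d : ℝ) - 4) / 2) =
      omegaConst (d - 2) / omegaConst (d - 3) := by
    have h := integral_one_sub_sq_rpow_eq_omegaConst_div (p := d - 3) (by linarith)
    rwa [show (d : ℝ) - 3 - 1 = d - 4 by ring, show (d : ℝ) - 3 + 1 = d - 2 by ring] at h
  calc |legendreP d n x|
      = omegaConst (d - 3) / omegaConst (d - 2) * |laplaceIntegral ((d - 4) / 2) n x| := by
        rw [legendreP_eq, abs_mul, abs_of_pos (div_pos hω hω')]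
    _ ≤ omegaConst (d - 3) / omegaConst (d - 2) *
          ∫ s in (-1 : ℝ)..1, (1 - s ^ 2) ^ (((d : ℝ) - 4) / 2) := by
        gcongr
        exact abs_laplaceIntegral_le (by linarith) n hx
    _ = 1 := by
        rw [hmass]
        field_simp

lemma legendreP_sub_add_two (hd : 3 ≤ d) (n : ℕ) (hx : x ∈ Set.Icc (-1 : ℝ) 1) :
    legendreP d n x - legendreP d (n + 2) x =
      (2 * n + d) / (d - 1) * (1 - x ^ 2) * legendreP (d + 2) n x := by
  have hd' : (3 : ℝ) ≤ d := mod_cast hd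
  have hd1 : (d : ℝ) - 1 ≠ 0 := by linarith
  have hd2 : (d : ℝ) - 2 ≠ 0 := by linarith
  have hω' : omegaConst (d - 2) ≠ 0 := (omegaConst_pos (by linarith)).ne'
  have hnum : omegaConst (↑(d + 2) - 3) = 2 * Real.pi / (d - 2) * omegaConst (d - 3) := by
    rw [show (↑(d + 2) : ℝ) - 3 = d - 3 + 2 by push_cast; ring,
      omegaConst_add_two (by linarith), show (d : ℝ) - 3 + 1 = d - 2 by ring]
  have hden : omegaConst (↑(d + 2) - 2) = 2 * Real.pi / (d - 1) * omegaConst (d - 2) := by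
    rw [show (↑(d + 2) : ℝ) - 2 = d - 2 + 2 by push_cast; ring,
      omegaConst_add_two (by linarith), show (d : ℝ) - 2 + 1 = d - 1 by ring]
  have hexp : ((↑(d + 2) : ℝ) - 4) / 2 = (d - 4) / 2 + 1 := by
    push_cast
    ring
  rw [legendreP_eq, legendreP_eq, legendreP_eq, ← mul_sub, hnum, hden, hexp,
    laplaceIntegral_sub_add_two (by linarith) n hx,
    show ((d : ℝ) - 4) / 2 + n + 2 = (2 * n + d) / 2 by ring,
    show ((d : ℝ) - 4) / 2 + 1 = (d - 2) / 2 by ring]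
  field_simp

end LegendreP

theorem legendre_gap_explicit_bound_general {d : ℕ} (hd : 3 ≤ d) (n : ℕ) {x : ℝ}
    (hx : x ∈ Set.Icc (-1 : ℝ) 1) :
    |legendreP d n x - legendreP d (n + 2) x| ≤ (2 * n + d) / (d - 1) * (1 - x ^ 2) := by
  have hd' : (3 : ℝ) ≤ d := mod_cast hd
  have hcoeff : 0 ≤ (2 * n + d) / (d - 1) * (1 - x ^ 2) :=
    mul_nonneg (div_nonneg (by positivity) (by linarith)) (one_sub_sq_nonneg hx)
  rw [legendreP_sub_add_two hd n hx, abs_mul, abs_of_nonneg hcoeff]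
  exact mul_le_of_le_one_right hcoeff (abs_legendreP_le_one (by lia) n hx)

theorem legendre_gap_explicit_bound
    (d ℓ : ℕ) (hd : 3 ≤ d) (hℓ : 1 ≤ ℓ) (x : ℝ) (hx : x ∈ Set.Icc (-1 : ℝ) 1) :
    legendreP d (2 * ℓ) x - legendreP d (2 * ℓ + 2) x ≤
      ((4 * (ℓ : ℝ) + (d : ℝ)) / ((d : ℝ) - 1)) * (1 - x ^ 2) := by
  calc legendreP d (2 * ℓ) x - legendreP d (2 * ℓ + 2) x
      ≤ (2 * ((2 * ℓ : ℕ) : ℝ) + d) / (d - 1) * (1 - x ^ 2) :=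
        (le_abs_self _).trans (legendre_gap_explicit_bound_general hd (2 * ℓ) hx)
    _ = (4 * ℓ + d) / (d - 1) * (1 - x ^ 2) := by
        push_cast
        ring
end

section
/- Let ℓ ≥ 1 be an integer and let x, s ∈ [−1, 1]. Define F(s, x) = Re((x + i s √(1−x²))^{2ℓ} − (x + i s √(1−x²))^{2(ℓ+1)}). Then F(s, x) ≤ (4ℓ + 2) s² (1 − x²) + (x² + s²(1 − x²))^{ℓ} (1 − x² − s²(1 − x²)). -/
/-!
For `‖z‖ ≤ 1` the identity `Re (w ^ 2) = ‖w‖ ^ 2 - 2 (Im w) ^ 2`, applied to `w = z ^ n` and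
`w = z ^ (n + 1)`, turns `Re (z ^ (2n) - z ^ (2(n + 1)))` into `‖z‖ ^ (2n) (1 - ‖z‖ ^ 2)` plus twice
the increment of `(Im (z ^ n)) ^ 2`. On the unit disk `|Im|` is subadditive under multiplication,
so `|Im (z ^ n)| ≤ n |Im z|`, and the increment is at most
`((n + 1) ^ 2 - n ^ 2) (Im z) ^ 2 = (2n + 1) (Im z) ^ 2`.
-/

section

variable {z w : ℂ}

theorem abs_im_mul_le_add (hz : |z.re| ≤ 1) (hw : |w.re| ≤ 1) :
    |(z * w).im| ≤ |z.im| + |w.im| :=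
  calc |(z * w).im| ≤ |z.re| * |w.im| + |z.im| * |w.re| := by
        simpa only [Complex.mul_im, abs_mul] using abs_add_le (z.re * w.im) (z.im * w.re)
    _ ≤ 1 * |w.im| + |z.im| * 1 := by gcongr
    _ = |z.im| + |w.im| := by ring

theorem abs_re_pow_le_one (hz : ‖z‖ ≤ 1) (n : ℕ) : |(z ^ n).re| ≤ 1 :=
  (Complex.abs_re_le_norm _).trans <| norm_pow z n ▸ pow_le_one₀ (norm_nonneg z) hz

theorem abs_im_pow_succ_le (hz : ‖z‖ ≤ 1) (n : ℕ) :
    |(z ^ (n + 1)).im| ≤ |(z ^ n).im| + |z.im| :=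
  pow_succ z n ▸
    abs_im_mul_le_add (abs_re_pow_le_one hz n) ((Complex.abs_re_le_norm z).trans hz)

theorem abs_im_pow_le (hz : ‖z‖ ≤ 1) (n : ℕ) : |(z ^ n).im| ≤ n * |z.im| := by
  induction n with
  | zero => simp
  | succ n ih =>
    calc |(z ^ (n + 1)).im| ≤ |(z ^ n).im| + |z.im| := abs_im_pow_succ_le hz n
      _ ≤ n * |z.im| + |z.im| := by gcongr
      _ = (n + 1 : ℕ) * |z.im| := by push_cast; ring

theorem im_pow_succ_sq_le (hz : ‖z‖ ≤ 1) (n : ℕ) :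
    (z ^ (n + 1)).im ^ 2 ≤ (z ^ n).im ^ 2 + (2 * n + 1) * z.im ^ 2 :=
  calc (z ^ (n + 1)).im ^ 2 = |(z ^ (n + 1)).im| ^ 2 := (sq_abs _).symm
    _ ≤ (|(z ^ n).im| + |z.im|) ^ 2 := by gcongr; exact abs_im_pow_succ_le hz n
    _ = |(z ^ n).im| ^ 2 + 2 * |(z ^ n).im| * |z.im| + |z.im| ^ 2 := add_sq _ _
    _ ≤ |(z ^ n).im| ^ 2 + 2 * (n * |z.im|) * |z.im| + |z.im| ^ 2 := by
        gcongr; exact abs_im_pow_le hz n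
    _ = |(z ^ n).im| ^ 2 + (2 * n + 1) * |z.im| ^ 2 := by ring
    _ = (z ^ n).im ^ 2 + (2 * n + 1) * z.im ^ 2 := by rw [sq_abs, sq_abs]

theorem re_sq_eq_norm_sq_sub (z : ℂ) : (z ^ 2).re = ‖z‖ ^ 2 - 2 * z.im ^ 2 := by
  rw [Complex.sq_norm, Complex.normSq_apply, sq z, Complex.mul_re]
  ring

theorem re_pow_two_mul (z : ℂ) (n : ℕ) :
    (z ^ (2 * n)).re = (‖z‖ ^ 2) ^ n - 2 * (z ^ n).im ^ 2 := by
  rw [mul_comm, pow_mul, re_sq_eq_norm_sq_sub, norm_pow, pow_right_comm]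

theorem re_pow_sub_pow_le (hz : ‖z‖ ≤ 1) (n : ℕ) :
    (z ^ (2 * n) - z ^ (2 * (n + 1))).re ≤
      (4 * n + 2) * z.im ^ 2 + (‖z‖ ^ 2) ^ n * (1 - ‖z‖ ^ 2) := by
  rw [Complex.sub_re, re_pow_two_mul, re_pow_two_mul, pow_succ (‖z‖ ^ 2)]
  linarith [im_pow_succ_sq_le hz n]

end

theorem re_pow_diff_bound (ℓ : ℕ) (hℓ : 1 ≤ ℓ) (x s : ℝ)
    (hx : x ∈ Set.Icc (-1 : ℝ) 1) (hs : s ∈ Set.Icc (-1 : ℝ) 1) :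
    ((((x : ℂ) + Complex.I * (s : ℂ) * (Real.sqrt (1 - x ^ 2) : ℂ)) ^ (2 * ℓ) -
        ((x : ℂ) + Complex.I * (s : ℂ) * (Real.sqrt (1 - x ^ 2) : ℂ)) ^ (2 * (ℓ + 1))).re) ≤
      (4 * (ℓ : ℝ) + 2) * s ^ 2 * (1 - x ^ 2) +
        (x ^ 2 + s ^ 2 * (1 - x ^ 2)) ^ ℓ * (1 - x ^ 2 - s ^ 2 * (1 - x ^ 2)) := by
  set z : ℂ := (x : ℂ) + Complex.I * (s : ℂ) * (Real.sqrt (1 - x ^ 2) : ℂ) with hz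
  have one_sub_sq_nonneg : 0 ≤ 1 - x ^ 2 :=
    sub_nonneg.2 <| (sq_le_one_iff_abs_le_one x).2 <| abs_le.2 hx
  have sq_s_le_one : s ^ 2 ≤ 1 := (sq_le_one_iff_abs_le_one s).2 <| abs_le.2 hs
  have re_z : z.re = x := by simp [hz]
  have im_z_sq : z.im ^ 2 = s ^ 2 * (1 - x ^ 2) := by
    simp [hz, mul_pow, Real.sq_sqrt one_sub_sq_nonneg]
  have norm_z_sq : ‖z‖ ^ 2 = x ^ 2 + s ^ 2 * (1 - x ^ 2) := by
    rw [Complex.sq_norm, Complex.normSq_apply, ← sq, ← sq, re_z, im_z_sq]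
  have norm_z_le_one : ‖z‖ ≤ 1 := by
    rw [← sq_le_one_iff₀ (norm_nonneg z), norm_z_sq]
    linarith [mul_le_of_le_one_left one_sub_sq_nonneg sq_s_le_one]
  calc (z ^ (2 * ℓ) - z ^ (2 * (ℓ + 1))).re
      ≤ (4 * ℓ + 2) * z.im ^ 2 + (‖z‖ ^ 2) ^ ℓ * (1 - ‖z‖ ^ 2) :=
        re_pow_sub_pow_le norm_z_le_one ℓ
    _ = _ := by rw [im_z_sq, norm_z_sq]; ring
end
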